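/- Assume the LAG setup, and in addition: 𝓛 attains its infimum 𝓛* := inf 𝓛 and satisfies the Polyak–Łojasiewicz condition with constant μ > 0, i.e. 2μ(𝓛(θ) − 𝓛*) ≤ ‖∇𝓛(θ)‖² for all θ ∈ E; the condition number κ := L/μ satisfies D ≤ κ; the parameters are ξ_d = ξ for all d with 0 < ξ < 1/D, α = (1 − √(Dξ))/L, and β_d = (D − d + 1)ξ/(2α√(Dξ)) for d = 1, …, D. Then for every k ≥ 1, V^{k+1} ≤ (1 − (1 − √(Dξ))/κ) V^k, and consequently 𝓛(θ^K) − 𝓛* ≤ (1 − (1 − √(Dξ))/κ)^{K−1} V^1 for every K ≥ 1. -/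

import Mathlib

open Finset

/-!
By the trigger condition the aggregated gradient `G` used by LAG is an inexact gradient of the total
loss `f`: `α² ‖G - ∇f‖²` is at most a weighted sum of the last `D` squared increments. A step along
`-G` lowers `f` by `α/2 ‖∇f‖²`, which is at least `α μ (f - f*)` by the Polyak–Łojasiewicz
inequality, and by `α/2 (1 - α L) ‖G‖²`, which pays for the increment newly entering the Lyapunov
function. It loses `α/2 ‖G - ∇f‖²`, which is paid for by the decay of the weights `β_d` in `d`.
-/

section DescentLemma

theorem norm_add_sub_sub_fderiv_le {E F : Type*} [NormedAddCommGroup E] [NormedSpace ℝ E]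
    [NormedAddCommGroup F] [NormedSpace ℝ F] {f : E → F} (hf : Differentiable ℝ f) {C : ℝ} {x : E}
    (hlip : ∀ y, ‖fderiv ℝ f y - fderiv ℝ f x‖ ≤ C * ‖y - x‖) (v : E) :
    ‖f (x + v) - f x - fderiv ℝ f x v‖ ≤ C / 2 * ‖v‖ ^ 2 := by
  have hremainder : ∀ t : ℝ, HasDerivAt (fun t : ℝ => f (x + t • v) - f x - t • fderiv ℝ f x v)
      (fderiv ℝ f (x + t • v) v - fderiv ℝ f x v) t := fun t => by
    have hline : HasDerivAt (fun t : ℝ => x + t • v) v t := by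
      simpa using ((hasDerivAt_id t).smul_const v).const_add x
    refine ((((hf _).hasFDerivAt.comp_hasDerivAt t hline).sub_const (f x)).sub
      ((hasDerivAt_id t).smul_const (fderiv ℝ f x v))).congr_deriv ?_
    rw [one_smul]
  have hbound : ∀ t : ℝ,
      HasDerivAt (fun t : ℝ => C / 2 * ‖v‖ ^ 2 * t ^ 2) (C * ‖v‖ ^ 2 * t) t := fun t => by
    refine ((hasDerivAt_pow 2 t).const_mul (C / 2 * ‖v‖ ^ 2)).congr_deriv ?_
    push_cast
    ring
  have hderiv_le : ∀ t ∈ Set.Ico (0 : ℝ) 1,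
      ‖fderiv ℝ f (x + t • v) v - fderiv ℝ f x v‖ ≤ C * ‖v‖ ^ 2 * t := fun t ht =>
    calc ‖fderiv ℝ f (x + t • v) v - fderiv ℝ f x v‖
        ≤ ‖fderiv ℝ f (x + t • v) - fderiv ℝ f x‖ * ‖v‖ :=
          (fderiv ℝ f (x + t • v) - fderiv ℝ f x).le_opNorm v
      _ ≤ C * ‖x + t • v - x‖ * ‖v‖ := by gcongr; exact hlip _
      _ = C * ‖v‖ ^ 2 * t := by
          rw [add_sub_cancel_left, norm_smul, Real.norm_of_nonneg ht.1]
          ring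
  simpa using image_norm_le_of_norm_deriv_right_le_deriv_boundary
    (fun t _ => (hremainder t).continuousAt.continuousWithinAt)
    (fun t _ => (hremainder t).hasDerivWithinAt) (by simp) hbound hderiv_le
    (Set.right_mem_Icc.2 zero_le_one)

variable {E : Type*} [NormedAddCommGroup E] [InnerProductSpace ℝ E] [CompleteSpace E]
  {f : E → ℝ} {C : ℝ} {x : E}

theorem le_add_inner_gradient_add (hf : Differentiable ℝ f)
    (hsmooth : ∀ y, ‖gradient f y - gradient f x‖ ≤ C * ‖y - x‖) (v : E) :
    f (x + v) ≤ f x + inner ℝ (gradient f x) v + C / 2 * ‖v‖ ^ 2 := by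
  have hlip : ∀ y, ‖fderiv ℝ f y - fderiv ℝ f x‖ ≤ C * ‖y - x‖ := fun y => by
    simpa only [← toDual_gradient, ← map_sub, LinearIsometryEquiv.norm_map] using hsmooth y
  have hremainder := (le_abs_self _).trans (norm_add_sub_sub_fderiv_le hf hlip v)
  rw [inner_gradient_left]
  linarith

theorem inexact_gradient_step_le (hf : Differentiable ℝ f)
    (hsmooth : ∀ y, ‖gradient f y - gradient f x‖ ≤ C * ‖y - x‖) (α : ℝ) (g : E) :
    f (x - α • g) ≤ f x - α / 2 * ‖gradient f x‖ ^ 2 + α / 2 * ‖g - gradient f x‖ ^ 2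
      - α / 2 * (1 - α * C) * ‖g‖ ^ 2 := by
  have hdescent := le_add_inner_gradient_add hf hsmooth (-(α • g))
  rw [← sub_eq_add_neg, norm_neg, norm_smul, mul_pow, Real.norm_eq_abs, sq_abs, inner_neg_right,
    inner_smul_right] at hdescent
  have hpolarization := norm_sub_sq_real g (gradient f x)
  rw [real_inner_comm] at hpolarization
  linear_combination hdescent - α / 2 * hpolarization

end DescentLemma

section Aggregation

variable {E ι : Type*} [Fintype ι]

theorem norm_sum_sq_le_card_sq_mul [SeminormedAddCommGroup E] {v : ι → E} {c : ℝ}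
    (hv : ∀ i, ‖v i‖ ^ 2 ≤ c) : ‖∑ i, v i‖ ^ 2 ≤ (Fintype.card ι : ℝ) ^ 2 * c :=
  calc ‖∑ i, v i‖ ^ 2 ≤ (∑ i, ‖v i‖) ^ 2 := by gcongr; exact norm_sum_le _ _
    _ ≤ Fintype.card ι * ∑ i, ‖v i‖ ^ 2 := sq_sum_le_card_mul_sum_sq
    _ ≤ Fintype.card ι * ∑ _i : ι, c := by gcongr with i; exact hv i
    _ = (Fintype.card ι : ℝ) ^ 2 * c := by
        rw [sum_const, card_univ, nsmul_eq_mul]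
        ring

variable [NormedAddCommGroup E] [InnerProductSpace ℝ E] [CompleteSpace E]

theorem gradient_fun_sum_univ {f : ι → E → ℝ} {x : E} (hf : ∀ i, DifferentiableAt ℝ (f i) x) :
    gradient (fun z => ∑ i, f i z) x = ∑ i, gradient (f i) x := by
  apply HasGradientAt.gradient
  rw [hasGradientAt_iff_hasFDerivAt, map_sum]
  exact HasFDerivAt.fun_sum fun i _ => (hf i).hasGradientAt.hasFDerivAt

theorem aggregated_gradient_error_le {f : ι → E → ℝ} {x : E} {xhat : ι → E} {α S : ℝ}
    (hf : ∀ i, DifferentiableAt ℝ (f i) x) (hS : 0 ≤ S)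
    (htrig : ∀ i, xhat i ≠ x → ‖gradient (f i) (xhat i) - gradient (f i) x‖ ^ 2
      ≤ 1 / (α ^ 2 * (Fintype.card ι : ℝ) ^ 2) * S) :
    α ^ 2 * ‖∑ i, gradient (f i) (xhat i) - gradient (fun z => ∑ i, f i z) x‖ ^ 2 ≤ S := by
  set N : ℝ := (Fintype.card ι : ℝ)
  have hworker : ∀ i, ‖gradient (f i) (xhat i) - gradient (f i) x‖ ^ 2
      ≤ 1 / (α ^ 2 * N ^ 2) * S := fun i => by
    rcases eq_or_ne (xhat i) x with hfresh | hstale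
    · rw [hfresh, sub_self, norm_zero, zero_pow two_ne_zero]
      positivity
    · exact htrig i hstale
  rw [gradient_fun_sum_univ hf, ← sum_sub_distrib]
  calc α ^ 2 * ‖∑ i, (gradient (f i) (xhat i) - gradient (f i) x)‖ ^ 2
      ≤ α ^ 2 * (N ^ 2 * (1 / (α ^ 2 * N ^ 2) * S)) := by
        gcongr
        exact norm_sum_sq_le_card_sq_mul hworker
    _ = (α ^ 2 * N ^ 2) / (α ^ 2 * N ^ 2) * S := by ring
    _ ≤ S := mul_le_of_le_one_left hS (div_self_le_one _)

end Aggregation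

section WeightedIncrements

variable {E : Type*} [SeminormedAddCommGroup E] {v w : ℕ → ℝ} {D : ℕ}

/-- The weighted sum `∑_{d=1}^D w_d ‖θ^{k+1-d} - θ^{k-d}‖²` of the last `D` squared increments
before time `k`. It serves both as the trigger threshold (up to scaling) and as the memory term of
the Lyapunov function. -/
def weightedIncrements (w : ℕ → ℝ) (D : ℕ) (θ : ℤ → E) (k : ℤ) : ℝ :=
  ∑ d ∈ Icc 1 D, w d * ‖θ (k + 1 - (d : ℤ)) - θ (k - (d : ℤ))‖ ^ 2

theorem weightedIncrements_mono (h : ∀ d ∈ Icc 1 D, v d ≤ w d) (θ : ℤ → E) (k : ℤ) :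
    weightedIncrements v D θ k ≤ weightedIncrements w D θ k :=
  sum_le_sum fun d hd => mul_le_mul_of_nonneg_right (h d hd) (sq_nonneg _)

theorem weightedIncrements_nonneg (h : ∀ d ∈ Icc 1 D, 0 ≤ w d) (θ : ℤ → E) (k : ℤ) :
    0 ≤ weightedIncrements w D θ k :=
  sum_nonneg fun d hd => mul_nonneg (h d hd) (sq_nonneg _)

theorem weightedIncrements_congr (h : ∀ d ∈ Icc 1 D, v d = w d) (θ : ℤ → E) (k : ℤ) :
    weightedIncrements v D θ k = weightedIncrements w D θ k :=
  sum_congr rfl fun d hd => by rw [h d hd]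

theorem weightedIncrements_add (v w : ℕ → ℝ) (D : ℕ) (θ : ℤ → E) (k : ℤ) :
    weightedIncrements (v + w) D θ k
      = weightedIncrements v D θ k + weightedIncrements w D θ k := by
  simp only [weightedIncrements, Pi.add_apply, add_mul, sum_add_distrib]

theorem weightedIncrements_smul (c : ℝ) (w : ℕ → ℝ) (D : ℕ) (θ : ℤ → E) (k : ℤ) :
    weightedIncrements (c • w) D θ k = c * weightedIncrements w D θ k := by
  simp only [weightedIncrements, Pi.smul_apply, smul_eq_mul, mul_assoc, mul_sum]

theorem weightedIncrements_add_one (w : ℕ → ℝ) (D : ℕ) (θ : ℤ → E) (k : ℤ) :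
    weightedIncrements w D θ (k + 1) + w (D + 1) * ‖θ (k + 1 - D) - θ (k - D)‖ ^ 2
      = w 1 * ‖θ (k + 1) - θ k‖ ^ 2 + weightedIncrements (fun d => w (d + 1)) D θ k := by
  induction D with
  | zero => simp [weightedIncrements]
  | succ D ih =>
    simp only [weightedIncrements] at ih ⊢
    rw [sum_Icc_succ_top (by lia), sum_Icc_succ_top (by lia), ← add_assoc, ← ih]
    push_cast
    rw [add_sub_add_right_eq_sub, add_sub_add_right_eq_sub]

theorem weightedIncrements_add_one_le (hw : 0 ≤ w (D + 1)) (θ : ℤ → E) (k : ℤ) :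
    weightedIncrements w D θ (k + 1)
      ≤ w 1 * ‖θ (k + 1) - θ k‖ ^ 2 + weightedIncrements (fun d => w (d + 1)) D θ k :=
  (le_add_of_nonneg_right (by positivity)).trans_eq (weightedIncrements_add_one w D θ k)

end WeightedIncrements

section Lyapunov

variable {E : Type*} [NormedAddCommGroup E]

/-- The LAG Lyapunov function `V^k = f(θ^k) - f* + ∑_{d=1}^D β_d ‖θ^{k+1-d} - θ^{k-d}‖²`. The
reference value `f*` is an arbitrary real number. -/
def lagLyapunov (f : E → ℝ) (fstar : ℝ) (β : ℕ → ℝ) (D : ℕ) (θ : ℤ → E) (k : ℤ) : ℝ :=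
  f (θ k) - fstar + weightedIncrements β D θ k

variable [InnerProductSpace ℝ E] [CompleteSpace E]
  {f : E → ℝ} {fstar L μ α : ℝ} {β ξ : ℕ → ℝ} {D : ℕ} {θ : ℤ → E} {k : ℤ} {g : E}

theorem lagLyapunov_add_one_le (hf : Differentiable ℝ f)
    (hsmooth : ∀ y, ‖gradient f y - gradient f (θ k)‖ ≤ L * ‖y - θ k‖)
    (hPL : 2 * μ * (f (θ k) - fstar) ≤ ‖gradient f (θ k)‖ ^ 2)
    (hα : 0 < α) (hstep : θ (k + 1) = θ k - α • g)
    (herror : α ^ 2 * ‖g - gradient f (θ k)‖ ^ 2 ≤ weightedIncrements ξ D θ k)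
    (hβ_one : β 1 ≤ (1 - α * L) / (2 * α))
    (hβ_decay : ∀ d ∈ Icc 1 D, β (d + 1) + ξ d / (2 * α) ≤ (1 - α * μ) * β d)
    (hβ_top : 0 ≤ β (D + 1)) :
    lagLyapunov f fstar β D θ (k + 1) ≤ (1 - α * μ) * lagLyapunov f fstar β D θ k := by
  have hdescent : f (θ (k + 1)) ≤ f (θ k) - α * μ * (f (θ k) - fstar)
      + α / 2 * ‖g - gradient f (θ k)‖ ^ 2 - α / 2 * (1 - α * L) * ‖g‖ ^ 2 := by
    rw [hstep]
    linear_combination inexact_gradient_step_le hf hsmooth α g + α / 2 * hPL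
  have herror_scaled : α / 2 * ‖g - gradient f (θ k)‖ ^ 2
      ≤ (2 * α)⁻¹ * weightedIncrements ξ D θ k := by
    rw [inv_mul_eq_div, le_div_iff₀ (by positivity)]
    linarith
  have hnew : β 1 * ‖θ (k + 1) - θ k‖ ^ 2 ≤ α / 2 * (1 - α * L) * ‖g‖ ^ 2 :=
    calc β 1 * ‖θ (k + 1) - θ k‖ ^ 2
        ≤ (1 - α * L) / (2 * α) * ‖θ (k + 1) - θ k‖ ^ 2 := by gcongr
      _ = α / 2 * (1 - α * L) * ‖g‖ ^ 2 := by
        rw [hstep, sub_sub_cancel_left, norm_neg, norm_smul, Real.norm_of_nonneg hα.le]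
        field_simp
  have hmemory : weightedIncrements (fun d => β (d + 1)) D θ k
      + (2 * α)⁻¹ * weightedIncrements ξ D θ k ≤ (1 - α * μ) * weightedIncrements β D θ k := by
    rw [← weightedIncrements_smul, ← weightedIncrements_smul, ← weightedIncrements_add]
    refine weightedIncrements_mono (fun d hd => ?_) θ k
    simpa only [Pi.add_apply, Pi.smul_apply, smul_eq_mul, inv_mul_eq_div] using hβ_decay d hd
  have hshift := weightedIncrements_add_one_le hβ_top θ k
  unfold lagLyapunov
  linarith

end Lyapunov

section LagWeight

/-- The Lyapunov weights `β_d = (D - d + 1) ξ / (2 α √(D ξ))` of the parameter choice (17), as a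
function of every natural number `d`; the value at `d = D + 1` is the convention `β_{D+1} = 0`. -/
noncomputable def lagWeight (D : ℕ) (ξ α : ℝ) (d : ℕ) : ℝ :=
  ((D : ℝ) - (d : ℝ) + 1) * ξ / (2 * α * Real.sqrt ((D : ℝ) * ξ))

variable {D d : ℕ} {ξ α : ℝ}

theorem lagWeight_nonneg (hξ : 0 ≤ ξ) (hα : 0 ≤ α) (hd : d ≤ D + 1) : 0 ≤ lagWeight D ξ α d := by
  have hd' : (d : ℝ) ≤ D + 1 := by exact_mod_cast hd
  exact div_nonneg (mul_nonneg (by linarith) hξ) (by positivity)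

theorem lagWeight_one (D : ℕ) (ξ α : ℝ) :
    lagWeight D ξ α 1 = Real.sqrt ((D : ℝ) * ξ) / (2 * α) := by
  rw [lagWeight, Nat.cast_one, sub_add_cancel, mul_comm (2 * α), ← div_div, Real.div_sqrt]

theorem lagWeight_add_one_add_le {c : ℝ} (hξ : 0 < ξ) (hα : 0 < α) (hc : 0 ≤ c)
    (hcD : c * D ≤ 1 - Real.sqrt ((D : ℝ) * ξ)) (hd : d ∈ Icc 1 D) :
    lagWeight D ξ α (d + 1) + ξ / (2 * α) ≤ (1 - c) * lagWeight D ξ α d := by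
  obtain ⟨hd_pos, hdD⟩ := mem_Icc.1 hd
  have hD : (0 : ℝ) < D := by exact_mod_cast hd_pos.trans hdD
  have hd_one : (1 : ℝ) ≤ d := by exact_mod_cast hd_pos
  set s := Real.sqrt ((D : ℝ) * ξ)
  have hs : 0 < s := Real.sqrt_pos.2 (mul_pos hD hξ)
  have hgap : (1 - c) * lagWeight D ξ α d - (lagWeight D ξ α (d + 1) + ξ / (2 * α))
      = (1 - s - c * (D - d + 1)) * (ξ / (2 * α * s)) := by
    simp only [lagWeight]
    push_cast
    field_simp
    ring
  have hfactor : c * (D - d + 1) ≤ c * D := by gcongr; linarith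
  rw [← sub_nonneg, hgap]
  exact mul_nonneg (by linarith) (by positivity)

end LagWeight

section LinearConvergence

variable {E : Type*} [NormedAddCommGroup E] {f : E → ℝ} {fstar : ℝ} {D : ℕ} {θ : ℤ → E}
  {β : ℕ → ℝ}

theorem sub_le_lagLyapunov (f : E → ℝ) (fstar : ℝ) (hβ : ∀ d ∈ Icc 1 D, 0 ≤ β d) (θ : ℤ → E)
    (k : ℤ) : f (θ k) - fstar ≤ lagLyapunov f fstar β D θ k :=
  le_add_of_nonneg_right (weightedIncrements_nonneg hβ θ k)

theorem sub_le_pow_mul_lagLyapunov_one {q : ℝ} (hq : 0 ≤ q) (hβ : ∀ d ∈ Icc 1 D, 0 ≤ β d)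
    (hcontract : ∀ k : ℤ, 1 ≤ k →
      lagLyapunov f fstar β D θ (k + 1) ≤ q * lagLyapunov f fstar β D θ k)
    {K : ℕ} (hK : 1 ≤ K) :
    f (θ K) - fstar ≤ q ^ (K - 1) * lagLyapunov f fstar β D θ 1 := by
  obtain ⟨j, rfl⟩ := Nat.exists_eq_add_of_le' hK
  have hgeom := le_geom (u := fun j : ℕ => lagLyapunov f fstar β D θ (j + 1)) hq j fun i _ => by
    simpa only [Nat.cast_add, Nat.cast_one] using hcontract (i + 1) (by lia)
  refine (sub_le_lagLyapunov f fstar hβ θ _).trans ?_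
  simpa using hgeom

variable [InnerProductSpace ℝ E] [CompleteSpace E] {L μ α ξ : ℝ}

theorem lagLyapunov_lagWeight_add_one_le {k : ℤ} {g : E} (hf : Differentiable ℝ f)
    (hsmooth : ∀ y, ‖gradient f y - gradient f (θ k)‖ ≤ L * ‖y - θ k‖)
    (hPL : 2 * μ * (f (θ k) - fstar) ≤ ‖gradient f (θ k)‖ ^ 2) (hμ : 0 ≤ μ)
    (hξ : 0 < ξ) (hα : 0 < α) (hαL : α * L ≤ 1 - Real.sqrt ((D : ℝ) * ξ))
    (hαμ : α * μ * D ≤ 1 - Real.sqrt ((D : ℝ) * ξ))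
    (hstep : θ (k + 1) = θ k - α • g)
    (herror : α ^ 2 * ‖g - gradient f (θ k)‖ ^ 2 ≤ weightedIncrements (fun _ => ξ) D θ k) :
    lagLyapunov f fstar (lagWeight D ξ α) D θ (k + 1)
      ≤ (1 - α * μ) * lagLyapunov f fstar (lagWeight D ξ α) D θ k := by
  refine lagLyapunov_add_one_le hf hsmooth hPL hα hstep herror ?_
    (fun d hd => lagWeight_add_one_add_le hξ hα (by positivity) hαμ hd)
    (lagWeight_nonneg hξ.le hα.le le_rfl)
  rw [lagWeight_one]
  gcongr
  linarith

theorem lag_linear_convergence_pl_general {ι : Type*} [Fintype ι] {Lf : ι → E → ℝ}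
    (hdiff : ∀ m, Differentiable ℝ (Lf m))
    (hsmooth : ∀ x y, ‖gradient (fun z => ∑ m, Lf m z) x - gradient (fun z => ∑ m, Lf m z) y‖
      ≤ L * ‖x - y‖)
    (hμ : 0 < μ)
    (hPL : ∀ x, 2 * μ * ((∑ m, Lf m x) - fstar) ≤ ‖gradient (fun z => ∑ m, Lf m z) x‖ ^ 2)
    (hD : 1 ≤ D) (hκ : (D : ℝ) ≤ L / μ) (hξ : 0 < ξ) (hξD : ξ < 1 / (D : ℝ))
    (hα : α = (1 - Real.sqrt ((D : ℝ) * ξ)) / L) {θhat : ℤ → ι → E}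
    (hupd : ∀ k : ℤ, 1 ≤ k → θ (k + 1) = θ k - α • ∑ m, gradient (Lf m) (θhat k m))
    (htrig : ∀ k : ℤ, 1 ≤ k → ∀ m, θhat k m ≠ θ k →
      ‖gradient (Lf m) (θhat k m) - gradient (Lf m) (θ k)‖ ^ 2
        ≤ 1 / (α ^ 2 * (Fintype.card ι : ℝ) ^ 2) * weightedIncrements (fun _ => ξ) D θ k) :
    (∀ k : ℤ, 1 ≤ k →
      lagLyapunov (fun x => ∑ m, Lf m x) fstar (lagWeight D ξ α) D θ (k + 1)
        ≤ (1 - (1 - Real.sqrt ((D : ℝ) * ξ)) / (L / μ))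
          * lagLyapunov (fun x => ∑ m, Lf m x) fstar (lagWeight D ξ α) D θ k)
    ∧ ∀ K : ℕ, 1 ≤ K →
      (∑ m, Lf m (θ K)) - fstar ≤ (1 - (1 - Real.sqrt ((D : ℝ) * ξ)) / (L / μ)) ^ (K - 1)
        * lagLyapunov (fun x => ∑ m, Lf m x) fstar (lagWeight D ξ α) D θ 1 := by
  have hD' : (1 : ℝ) ≤ D := by exact_mod_cast hD
  have hsqrt_lt_one : Real.sqrt ((D : ℝ) * ξ) < 1 := by
    rw [Real.sqrt_lt' one_pos, one_pow]
    exact (lt_div_iff₀' (by linarith)).1 hξD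
  have hDμ : μ * D ≤ L := (le_div_iff₀' hμ).1 hκ
  have hL : 0 < L := lt_of_lt_of_le (by positivity) hDμ
  have hα_pos : 0 < α := hα ▸ div_pos (sub_pos.2 hsqrt_lt_one) hL
  have hαL : α * L = 1 - Real.sqrt ((D : ℝ) * ξ) := by rw [hα, div_mul_cancel₀ _ hL.ne']
  have hαμ : α * μ * D ≤ 1 - Real.sqrt ((D : ℝ) * ξ) := by
    rw [← hαL, mul_assoc]
    gcongr
  have hrate : (1 - Real.sqrt ((D : ℝ) * ξ)) / (L / μ) = α * μ := by
    rw [hα, div_div_eq_mul_div, div_mul_eq_mul_div]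
  have hrate_nonneg : 0 ≤ 1 - α * μ := by
    have := le_mul_of_one_le_right (by positivity : 0 ≤ α * μ) hD'
    linarith [Real.sqrt_nonneg ((D : ℝ) * ξ)]
  rw [hrate]
  have hcontract : ∀ k : ℤ, 1 ≤ k →
      lagLyapunov (fun x => ∑ m, Lf m x) fstar (lagWeight D ξ α) D θ (k + 1)
        ≤ (1 - α * μ) * lagLyapunov (fun x => ∑ m, Lf m x) fstar (lagWeight D ξ α) D θ k :=
    fun k hk => lagLyapunov_lagWeight_add_one_le (Differentiable.fun_sum fun m _ => hdiff m)
      (fun y => hsmooth y (θ k)) (hPL (θ k)) hμ.le hξ hα_pos hαL.le hαμ (hupd k hk)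
      (aggregated_gradient_error_le (fun m => hdiff m (θ k))
        (weightedIncrements_nonneg (fun _ _ => hξ.le) θ k) (htrig k hk))
  exact ⟨hcontract, fun K hK => sub_le_pow_mul_lagLyapunov_one hrate_nonneg
    (fun d hd => lagWeight_nonneg hξ.le hα_pos.le ((mem_Icc.1 hd).2.trans D.le_succ)) hcontract hK⟩

end LinearConvergence

/-- Theorem 1 (strongly convex / PL case) with the concrete parameter choice (17):
linear convergence of the LAG Lyapunov function and of the optimality gap. -/
theorem lag_linear_convergence_pl {n : ℕ}
    (M D : ℕ) (hM : 1 ≤ M) (hD : 1 ≤ D)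
    (Lf : Fin M → EuclideanSpace ℝ (Fin n) → ℝ)
    (hdiff : ∀ m, Differentiable ℝ (Lf m))
    (L : ℝ) (hL : 0 < L)
    (hsmooth : ∀ x y, ‖gradient (fun z => ∑ m, Lf m z) x
        - gradient (fun z => ∑ m, Lf m z) y‖ ≤ L * ‖x - y‖)
    (μ : ℝ) (hμ : 0 < μ)
    (Lstar : ℝ)
    (hinf : ∀ x, Lstar ≤ ∑ m, Lf m x)
    (hattain : ∃ x, (∑ m, Lf m x) = Lstar)
    (hPL : ∀ x, 2 * μ * ((∑ m, Lf m x) - Lstar)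
      ≤ ‖gradient (fun z => ∑ m, Lf m z) x‖ ^ 2)
    (hκ : (D : ℝ) ≤ L / μ)
    (ξ0 : ℝ) (hξ0 : 0 < ξ0) (hξ0D : ξ0 < 1 / (D : ℝ))
    (ξ : ℕ → ℝ) (hξ : ∀ d ∈ Finset.Icc 1 D, ξ d = ξ0)
    (α : ℝ) (hα : α = (1 - Real.sqrt ((D : ℝ) * ξ0)) / L)
    (β : ℕ → ℝ)
    (hβ : ∀ d ∈ Finset.Icc 1 D,
      β d = ((D : ℝ) - (d : ℝ) + 1) * ξ0 / (2 * α * Real.sqrt ((D : ℝ) * ξ0)))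
    (hβD : β (D + 1) = 0)
    (θ : ℤ → EuclideanSpace ℝ (Fin n))
    (hpast : ∀ k : ℤ, k ≤ 1 → θ k = θ 1)
    (Mc : ℤ → Finset (Fin M))
    (θhat : ℤ → Fin M → EuclideanSpace ℝ (Fin n))
    (hhat0 : ∀ m, θhat 0 m = θ 1)
    (hhat : ∀ k : ℤ, 1 ≤ k → ∀ m : Fin M,
      (m ∈ Mc k → θhat k m = θhat (k - 1) m) ∧ (m ∉ Mc k → θhat k m = θ k))
    (hupd : ∀ k : ℤ, 1 ≤ k →
      θ (k + 1) = θ k - α • ∑ m, gradient (Lf m) (θhat k m))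
    (htrig : ∀ k : ℤ, 1 ≤ k → ∀ m ∈ Mc k,
      ‖gradient (Lf m) (θhat k m) - gradient (Lf m) (θ k)‖ ^ 2
        ≤ (1 / (α ^ 2 * (M : ℝ) ^ 2)) *
            ∑ d ∈ Finset.Icc 1 D, ξ d * ‖θ (k + 1 - (d : ℤ)) - θ (k - (d : ℤ))‖ ^ 2)
    (V : ℤ → ℝ)
    (hV : ∀ k : ℤ, V k = (∑ m, Lf m (θ k)) - Lstar
      + ∑ d ∈ Finset.Icc 1 D, β d * ‖θ (k + 1 - (d : ℤ)) - θ (k - (d : ℤ))‖ ^ 2) :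
    (∀ k : ℤ, 1 ≤ k →
      V (k + 1) ≤ (1 - (1 - Real.sqrt ((D : ℝ) * ξ0)) / (L / μ)) * V k)
    ∧ (∀ K : ℕ, 1 ≤ K →
      (∑ m, Lf m (θ (K : ℤ))) - Lstar
        ≤ (1 - (1 - Real.sqrt ((D : ℝ) * ξ0)) / (L / μ)) ^ (K - 1) * V 1) := by
  obtain rfl : V = lagLyapunov (fun x => ∑ m, Lf m x) Lstar (lagWeight D ξ0 α) D θ :=
    funext fun k => (hV k).trans (congrArg (_ + ·) (weightedIncrements_congr hβ θ k))
  exact lag_linear_convergence_pl_general hdiff hsmooth hμ hPL hD hκ hξ0 hξ0D hα hupd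
    fun k hk m hstale => by
      rw [Fintype.card_fin, ← weightedIncrements_congr hξ]
      exact htrig k hk m (by_contra fun hm => hstale ((hhat k hk m).2 hm))
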